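/- arXiv:1812.11033 — 2 statements merged into one kernel-verified Lean document; each statement's English description precedes it below -/
import Mathlib

section
/- (Lemma 1) Let x(t) = Σ_{k=1}^K A_k(t)e^{2πiφ_k(t)} belong to the class 𝒟⁽²⁾ described in the context, let g, σ and the transforms Ṽ^w_x, the chirp kernels G^w_ℓ, and residuals err^w be as in the context, and fix k ∈ {1,…,K}. Then ∂_t Ṽ_x(t,η) = (2πi φ'_k(t) − σ'(t)/σ(t)) Ṽ_x(t,η) + 2πi φ''_k(t) σ(t) Ṽ^{g₁}_x(t,η) − (σ'(t)/σ(t)) Ṽ^{g₃}_x(t,η) + Err₁, where Err₁ = 2πi B_k(t,η) + 2πi σ(t) D_k(t,η) + 2πi(η − φ'_k(t)) err⁰ − err'⁰/σ(t) − 2πi φ''_k(t) σ(t) err¹, with B_k(t,η) = Σ_{ℓ≠k} x_ℓ(t)(φ'_ℓ(t) − φ'_k(t)) G_{0,ℓ}(t,η) and D_k(t,η) = Σ_{ℓ≠k} x_ℓ(t)(φ''_ℓ(t) − φ''_k(t)) G_{1,ℓ}(t,η). -/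
/-!
Substituting `u = t + τ` gives `Ṽ_x(t,η) = ∫ x(u) σ(t)⁻¹ g((u-t)/σ(t)) e^{-2πiη(u-t)} du`, whose
integrand depends on `t` only through `C¹` factors. As `x` is bounded and continuous and `g` is
Schwartz, one may differentiate under the integral (`hasDerivAt_adSTFT`):
`∂_t Ṽ_x = (2πiη - σ'/σ) Ṽ_x - Ṽ^{g'}_x/σ - (σ'/σ) Ṽ^{g₃}_x`.

After inserting the definitions of the residuals, the claimed identity differs from this one by
the sum over `ℓ` of `x_ℓ(t)` times
`2πi(φ'_ℓ - η) G_{0,ℓ} + 2πi φ''_ℓ σ G_{1,ℓ} + G^{g'}_ℓ/σ`,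
and each of these is zero, being the integral of the `τ`-derivative of the integrand of `G_{0,ℓ}`
(`chirpG_relation`).
-/

open MeasureTheory Real Set Filter
open scoped Topology Real

noncomputable section

/-- `e2πi θ = exp(2πiθ)`. -/
def e2πi (θ : ℝ) : ℂ := Complex.exp (2 * (π : ℂ) * (θ : ℂ) * Complex.I)

/-- Fourier transform with the convention `ŵ(ξ) = ∫ w(u) e^{-2πiξu} du`. -/
def ft (w : ℝ → ℂ) (ξ : ℝ) : ℂ := ∫ u : ℝ, w u * e2πi (-(ξ * u))

/-- The adaptive STFT with window `w` and time-varying parameter `σ`. -/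
def adSTFT (σ : ℝ → ℝ) (w : ℝ → ℂ) (x : ℝ → ℂ) (t η : ℝ) : ℂ :=
  ∫ τ : ℝ, x (t + τ) * ((σ t : ℂ))⁻¹ * w (τ / σ t) * e2πi (-(η * τ))

/-- Absolute moments `I_n = ∫ |τ^n w(τ)| dτ`. -/
def absMom (w : ℝ → ℂ) (n : ℕ) : ℝ := ∫ τ : ℝ, |τ| ^ n * ‖w τ‖

/-- The window `g₁(u) = u g(u)`. -/
def g1w (g : ℝ → ℂ) : ℝ → ℂ := fun u => (u : ℂ) * g u

/-- The window `g₂(u) = u² g(u)`. -/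
def g2w (g : ℝ → ℂ) : ℝ → ℂ := fun u => (u : ℂ) ^ 2 * g u

/-- The window `g₃(u) = u g'(u)`. -/
def g3w (g : ℝ → ℂ) : ℝ → ℂ := fun u => (u : ℂ) * deriv g u

/-- `∂_t` of the adaptive STFT. -/
def adSTFTt (σ : ℝ → ℝ) (w : ℝ → ℂ) (x : ℝ → ℂ) (t η : ℝ) : ℂ :=
  deriv (fun s => adSTFT σ w x s η) t

/-- `∂_η` of the adaptive STFT. -/
def adSTFTη (σ : ℝ → ℝ) (w : ℝ → ℂ) (x : ℝ → ℂ) (t η : ℝ) : ℂ :=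
  deriv (fun η' => adSTFT σ w x t η') η

/-- The complex phase transformation `ω^{adp,c}` of the adaptive FSST. -/
def omegaC (σ : ℝ → ℝ) (g x : ℝ → ℂ) (t η : ℝ) : ℂ :=
  adSTFTt σ g x t η / (2 * (π : ℂ) * Complex.I * adSTFT σ g x t η)
  + ((deriv σ t : ℝ) : ℂ) / (2 * (π : ℂ) * Complex.I * (σ t : ℂ))
  + ((deriv σ t / σ t : ℝ) : ℂ) * adSTFT σ (g3w g) x t η /
      (2 * (π : ℂ) * Complex.I * adSTFT σ g x t η)

/-- The (real) phase transformation `ω^{adp}` of the adaptive FSST. -/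
def omegaAdp (σ : ℝ → ℝ) (g x : ℝ → ℂ) (t η : ℝ) : ℝ :=
  (adSTFTt σ g x t η / (2 * (π : ℂ) * Complex.I * adSTFT σ g x t η)).re
  + (deriv σ t / σ t) *
      (adSTFT σ (g3w g) x t η / (2 * (π : ℂ) * Complex.I * adSTFT σ g x t η)).re

/-- The quantity `P₀(t,η)` of the second-order adaptive FSST. -/
def P0 (σ : ℝ → ℝ) (g x : ℝ → ℂ) (t η : ℝ) : ℂ :=
  (deriv (fun η' => adSTFTt σ g x t η' / adSTFT σ g x t η') η
    + ((deriv σ t / σ t : ℝ) : ℂ) *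
        deriv (fun η' => adSTFT σ (g3w g) x t η' / adSTFT σ g x t η') η)
  / deriv (fun η' => adSTFT σ (g1w g) x t η' / adSTFT σ g x t η') η

/-- The complex second-order phase transformation `ω^{adp,2nd,c}`. -/
def omega2C (σ : ℝ → ℝ) (g x : ℝ → ℂ) (t η : ℝ) : ℂ :=
  ((deriv σ t : ℝ) : ℂ) / (2 * (π : ℂ) * Complex.I * (σ t : ℂ))
  + adSTFTt σ g x t η / (2 * (π : ℂ) * Complex.I * adSTFT σ g x t η)
  - adSTFT σ (g1w g) x t η / (2 * (π : ℂ) * Complex.I * adSTFT σ g x t η) * P0 σ g x t η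
  + ((deriv σ t / σ t : ℝ) : ℂ) * adSTFT σ (g3w g) x t η /
      (2 * (π : ℂ) * Complex.I * adSTFT σ g x t η)

/-- The (real) second-order phase transformation `ω^{adp,2nd}`. -/
def omega2 (σ : ℝ → ℝ) (g x : ℝ → ℂ) (t η : ℝ) : ℝ := (omega2C σ g x t η).re

/-- The adaptive FSST `R^{adp,λ}_{x,γ}`. -/
def fsst (σ : ℝ → ℝ) (g x : ℝ → ℂ) (h : ℝ → ℝ) (γ lam t ξ : ℝ) : ℂ :=
  ∫ η in {η : ℝ | γ < ‖adSTFT σ g x t η‖},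
    adSTFT σ g x t η * ((lam⁻¹ * h ((ξ - omegaAdp σ g x t η) / lam) : ℝ) : ℂ)

/-- The second-order adaptive FSST `R^{adp,2nd,λ}_{x,γ₁,γ₂}`. -/
def fsst2 (σ : ℝ → ℝ) (g x : ℝ → ℂ) (h : ℝ → ℝ) (γ₁ γ₂ lam t ξ : ℝ) : ℂ :=
  ∫ η in {η : ℝ | γ₁ < ‖adSTFT σ g x t η‖ ∧
      γ₂ < ‖deriv (fun η' => adSTFT σ (g1w g) x t η' / adSTFT σ g x t η') η‖},
    adSTFT σ g x t η * ((lam⁻¹ * h ((ξ - omega2 σ g x t η) / lam) : ℝ) : ℂ)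

/-- The chirp kernel `G^w_ℓ(t,η)` associated with linear phase `a` and chirp rate `b`. -/
def chirpG (σ : ℝ → ℝ) (w : ℝ → ℂ) (a b : ℝ) (t η : ℝ) : ℂ :=
  ∫ τ : ℝ, e2πi (a * τ + b * τ ^ 2 / 2) * ((σ t : ℂ))⁻¹ * w (τ / σ t) * e2πi (-(η * τ))

/-- The Fourier transform of the chirped window `e^{iπru²} w(u)`. -/
def chirpFT (r : ℝ) (w : ℝ → ℂ) (ξ : ℝ) : ℂ :=
  ∫ u : ℝ, e2πi (r * u ^ 2 / 2) * w u * e2πi (-(ξ * u))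

/-- The residual `err^w(t,η) = Ṽ^w_x(t,η) - Σ_ℓ x_ℓ(t) G^w_ℓ(t,η)`. -/
def errW (σ : ℝ → ℝ) (w : ℝ → ℂ) (K : ℕ) (A φ : Fin K → ℝ → ℝ) (x : ℝ → ℂ)
    (t η : ℝ) : ℂ :=
  adSTFT σ w x t η - ∑ ℓ, (A ℓ t : ℂ) * e2πi (φ ℓ t) *
    chirpG σ w (deriv (φ ℓ) t) (deriv (deriv (φ ℓ)) t) t η

/-- The quantity `Err₁` of the second-order analysis. -/
def Err1 (σ : ℝ → ℝ) (g x : ℝ → ℂ) (K : ℕ) (A φ : Fin K → ℝ → ℝ) (k : Fin K)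
    (t η : ℝ) : ℂ :=
  2 * (π : ℂ) * Complex.I *
      (∑ ℓ ∈ Finset.univ.erase k, (A ℓ t : ℂ) * e2πi (φ ℓ t) *
        ((deriv (φ ℓ) t - deriv (φ k) t : ℝ) : ℂ) *
        chirpG σ g (deriv (φ ℓ) t) (deriv (deriv (φ ℓ)) t) t η)
  + 2 * (π : ℂ) * Complex.I * (σ t : ℂ) *
      (∑ ℓ ∈ Finset.univ.erase k, (A ℓ t : ℂ) * e2πi (φ ℓ t) *
        ((deriv (deriv (φ ℓ)) t - deriv (deriv (φ k)) t : ℝ) : ℂ) *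
        chirpG σ (g1w g) (deriv (φ ℓ) t) (deriv (deriv (φ ℓ)) t) t η)
  + 2 * (π : ℂ) * Complex.I * ((η - deriv (φ k) t : ℝ) : ℂ) * errW σ g K A φ x t η
  - errW σ (deriv g) K A φ x t η / (σ t : ℂ)
  - 2 * (π : ℂ) * Complex.I * ((deriv (deriv (φ k)) t : ℝ) : ℂ) * (σ t : ℂ) *
      errW σ (g1w g) K A φ x t η

/-- The quantity `Err₂` of the second-order analysis. -/
def Err2 (σ : ℝ → ℝ) (g x : ℝ → ℂ) (K : ℕ) (A φ : Fin K → ℝ → ℝ) (k : Fin K)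
    (t η : ℝ) : ℂ :=
  4 * (π : ℂ) ^ 2 * (σ t : ℂ) *
      (∑ ℓ ∈ Finset.univ.erase k, (A ℓ t : ℂ) * e2πi (φ ℓ t) *
        ((deriv (φ ℓ) t - deriv (φ k) t : ℝ) : ℂ) *
        chirpG σ (g1w g) (deriv (φ ℓ) t) (deriv (deriv (φ ℓ)) t) t η)
  + 4 * (π : ℂ) ^ 2 * (σ t : ℂ) ^ 2 *
      (∑ ℓ ∈ Finset.univ.erase k, (A ℓ t : ℂ) * e2πi (φ ℓ t) *
        ((deriv (deriv (φ ℓ)) t - deriv (deriv (φ k)) t : ℝ) : ℂ) *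
        chirpG σ (g2w g) (deriv (φ ℓ) t) (deriv (deriv (φ ℓ)) t) t η)
  + 2 * (π : ℂ) * Complex.I * errW σ g K A φ x t η
  + 4 * (π : ℂ) ^ 2 * ((η - deriv (φ k) t : ℝ) : ℂ) * (σ t : ℂ) * errW σ (g1w g) K A φ x t η
  + 2 * (π : ℂ) * Complex.I * errW σ (g3w g) K A φ x t η
  - 4 * (π : ℂ) ^ 2 * ((deriv (deriv (φ k)) t : ℝ) : ℂ) * (σ t : ℂ) ^ 2 *
      errW σ (g2w g) K A φ x t η

/-- The quantity `Err₃` of the second-order analysis. -/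
def Err3 (σ : ℝ → ℝ) (g x : ℝ → ℂ) (K : ℕ) (A φ : Fin K → ℝ → ℝ) (k : Fin K)
    (t η : ℝ) : ℂ :=
  (adSTFT σ g x t η * Err2 σ g x K A φ k t η
    - adSTFTη σ g x t η * Err1 σ g x K A φ k t η)
  / (adSTFT σ g x t η * adSTFTη σ (g1w g) x t η
    - adSTFT σ (g1w g) x t η * adSTFTη σ g x t η)

/-! ### Windows and the character `e2πi` -/

/-- Continuity together with decay of order `1/(1+v²)`: all that is used about the windows
`g`, `g'`, `u g(u)`, `u g'(u)`. -/
def QuadDecay (w : ℝ → ℂ) : Prop :=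
  Continuous w ∧ ∃ C : ℝ, 0 ≤ C ∧ ∀ v, ‖w v‖ ≤ C * (1 + v ^ 2)⁻¹

lemma norm_e2πi (θ : ℝ) : ‖e2πi θ‖ = 1 := by
  have : (2 * (π : ℂ) * (θ : ℂ) * Complex.I) = ((2 * π * θ : ℝ) : ℂ) * Complex.I := by
    push_cast; ring
  rw [e2πi, this, Complex.norm_exp_ofReal_mul_I]

lemma continuous_e2πi : Continuous e2πi := by
  unfold e2πi
  fun_prop

lemma hasDerivAt_e2πi {θ : ℝ → ℝ} {θ' s : ℝ} (h : HasDerivAt θ θ' s) :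
    HasDerivAt (fun s => e2πi (θ s)) (2 * (π : ℂ) * Complex.I * (θ' : ℂ) * e2πi (θ s)) s := by
  unfold e2πi
  have h1 := (((h.ofReal_comp).const_mul (2 * (π : ℂ))).mul_const Complex.I).cexp
  refine h1.congr_deriv ?_
  ring

lemma quadDecay_schwartz (f : SchwartzMap ℝ ℂ) : QuadDecay f := by
  refine ⟨f.continuous, ?_⟩
  obtain ⟨C0, h0, hC0⟩ := f.decay 0 0
  obtain ⟨C2, h2, hC2⟩ := f.decay 2 0
  refine ⟨C0 + C2, by positivity, fun v => ?_⟩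
  have a := hC0 v
  have b := hC2 v
  simp only [norm_iteratedFDeriv_zero, pow_zero, one_mul, Real.norm_eq_abs, sq_abs] at a b
  rw [← div_eq_mul_inv, le_div_iff₀ (by positivity)]
  linarith

lemma quadDecay_id_mul_schwartz (f : SchwartzMap ℝ ℂ) :
    QuadDecay (fun u => (u : ℂ) * f u) := by
  refine ⟨Complex.continuous_ofReal.mul f.continuous, ?_⟩
  obtain ⟨C1, h1, hC1⟩ := f.decay 1 0
  obtain ⟨C3, h3, hC3⟩ := f.decay 3 0
  refine ⟨C1 + C3, by positivity, fun v => ?_⟩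
  have a := hC1 v
  have b := hC3 v
  simp only [norm_iteratedFDeriv_zero, pow_one, Real.norm_eq_abs] at a b
  rw [← div_eq_mul_inv, le_div_iff₀ (by positivity), norm_mul, Complex.norm_real,
    Real.norm_eq_abs]
  have : |v| ^ 3 * ‖f v‖ = |v| * ‖f v‖ * v ^ 2 := by rw [← sq_abs v]; ring
  linarith

lemma quadDecay_deriv (g : SchwartzMap ℝ ℂ) : QuadDecay (deriv g) :=
  quadDecay_schwartz (SchwartzMap.derivCLM ℂ ℂ g)

lemma quadDecay_g1w (g : SchwartzMap ℝ ℂ) : QuadDecay (g1w g) :=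
  quadDecay_id_mul_schwartz g

lemma quadDecay_g3w (g : SchwartzMap ℝ ℂ) : QuadDecay (g3w g) :=
  quadDecay_id_mul_schwartz (SchwartzMap.derivCLM ℂ ℂ g)

lemma QuadDecay.integrable {w : ℝ → ℂ} (hw : QuadDecay w) : Integrable w := by
  obtain ⟨hc, C, -, hC⟩ := hw
  exact (integrable_inv_one_add_sq.const_mul C).mono' hc.aestronglyMeasurable (.of_forall hC)

/-! ### The time derivative of the adaptive STFT -/

/-- The integrand of `adSTFT` after the substitution `u = s + τ`, which moves all dependence on
`s` away from the signal `x`. -/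
def shiftKer (σ : ℝ → ℝ) (x : ℝ → ℂ) (η : ℝ) (w : ℝ → ℂ) (s u : ℝ) : ℂ :=
  x u * ((σ s : ℂ))⁻¹ * w ((u - s) / σ s) * e2πi (-(η * (u - s)))

lemma adSTFT_eq_integral_shiftKer (σ : ℝ → ℝ) (x w : ℝ → ℂ) (s η : ℝ) :
    adSTFT σ w x s η = ∫ u, shiftKer σ x η w s u := by
  rw [← integral_add_left_eq_self _ s]
  simp only [adSTFT, shiftKer, add_sub_cancel_left]

lemma continuous_shiftKer {σ : ℝ → ℝ} {x w : ℝ → ℂ} (hx : Continuous x) (hw : QuadDecay w)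
    (η s : ℝ) : Continuous (shiftKer σ x η w s) := by
  have := hw.1
  have := continuous_e2πi
  unfold shiftKer
  fun_prop

/-- Domination of the shifted integrand, locally uniform in `s`. -/
lemma exists_shiftKer_bound {σ : ℝ → ℝ} (hσ : Continuous σ) (hσpos : ∀ s, 0 < σ s)
    {x w : ℝ → ℂ} (hxb : ∃ C, ∀ s, ‖x s‖ ≤ C) (hw : QuadDecay w) (η t : ℝ) :
    ∃ C : ℝ, 0 ≤ C ∧ ∀ s ∈ Icc (t - 1) (t + 1), ∀ u,
      ‖shiftKer σ x η w s u‖ ≤ C * (1 + (u - t) ^ 2)⁻¹ := by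
  obtain ⟨X, hX⟩ := hxb
  have hX0 : 0 ≤ X := (norm_nonneg _).trans (hX 0)
  obtain ⟨-, C, hC0, hC⟩ := hw
  obtain ⟨M, hM⟩ := (isCompact_Icc (a := t - 1) (b := t + 1)).exists_bound_of_continuousOn
    hσ.continuousOn
  obtain ⟨N, hN⟩ := (isCompact_Icc (a := t - 1) (b := t + 1)).exists_bound_of_continuousOn
    (hσ.inv₀ fun s => (hσpos s).ne').continuousOn
  have ht : t ∈ Icc (t - 1) (t + 1) := ⟨by linarith, by linarith⟩
  have hN0 : 0 ≤ N := (norm_nonneg _).trans (hN t ht)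
  refine ⟨X * N * (C * (3 * (1 + M ^ 2))), by positivity, fun s hs u => ?_⟩
  have hσs := hσpos s
  have hMs : σ s ≤ M := (le_abs_self _).trans (hM s hs)
  have hNs := hN s hs
  have hd : (s - t) ^ 2 ≤ 1 := by
    have h1 := hs.1
    have h2 := hs.2
    nlinarith
  -- `1 + (u-t)² ≤ 3 (1 + (u-s)²)` for `|s - t| ≤ 1`, and `(u-s)² ≤ M² ((u-s)/σ)²`.
  have hkey : (1 + ((u - s) / σ s) ^ 2)⁻¹ ≤ 3 * (1 + M ^ 2) * (1 + (u - t) ^ 2)⁻¹ := by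
    rw [← div_eq_mul_inv, le_div_iff₀ (by positivity), inv_mul_le_iff₀ (by positivity)]
    have e : (u - s) = (u - s) / σ s * σ s := by field_simp
    set v := (u - s) / σ s
    have h3 : (u - t) ^ 2 ≤ 2 * (u - s) ^ 2 + 2 * (s - t) ^ 2 := by
      nlinarith [sq_nonneg (u - s - (s - t))]
    have h4 : (u - s) ^ 2 ≤ v ^ 2 * M ^ 2 := by
      rw [e, mul_pow]
      gcongr
    nlinarith [sq_nonneg v, sq_nonneg M]
  have hinv : ‖((σ s : ℂ))⁻¹‖ ≤ N := by
    rw [← Complex.ofReal_inv, Complex.norm_real]; exact hNs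
  calc ‖shiftKer σ x η w s u‖
      = ‖x u‖ * ‖((σ s : ℂ))⁻¹‖ * ‖w ((u - s) / σ s)‖ := by
        simp only [shiftKer, norm_mul, norm_e2πi, mul_one]
    _ ≤ X * N * (C * (1 + ((u - s) / σ s) ^ 2)⁻¹) := by
        gcongr
        · exact hX u
        · exact hC _
    _ ≤ X * N * (C * (3 * (1 + M ^ 2) * (1 + (u - t) ^ 2)⁻¹)) := by gcongr
    _ = _ := by ring

lemma integrable_shiftKer {σ : ℝ → ℝ} (hσ : Continuous σ) (hσpos : ∀ s, 0 < σ s)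
    {x w : ℝ → ℂ} (hx : Continuous x) (hxb : ∃ C, ∀ s, ‖x s‖ ≤ C) (hw : QuadDecay w)
    (η t : ℝ) : Integrable (shiftKer σ x η w t) := by
  obtain ⟨C, -, hC⟩ := exists_shiftKer_bound hσ hσpos hxb hw η t
  exact ((integrable_inv_one_add_sq.comp_sub_right t).const_mul C).mono'
    (continuous_shiftKer hx hw η t).aestronglyMeasurable
    (.of_forall (hC t ⟨by linarith, by linarith⟩))

lemma hasDerivAt_shiftKer {σ : ℝ → ℝ} (hσ : ContDiff ℝ 1 σ) (hσpos : ∀ s, 0 < σ s)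
    (x : ℝ → ℂ) (g : SchwartzMap ℝ ℂ) (η s u : ℝ) :
    HasDerivAt (fun s => shiftKer σ x η g s u)
      ((2 * (π : ℂ) * Complex.I * η - ((deriv σ s / σ s : ℝ) : ℂ)) * shiftKer σ x η g s u
        - ((σ s)⁻¹ : ℝ) * shiftKer σ x η (deriv g) s u
        - ((deriv σ s / σ s : ℝ) : ℂ) * shiftKer σ x η (g3w g) s u) s := by
  have hσ0 : σ s ≠ 0 := (hσpos s).ne'
  have hσ0c : (σ s : ℂ) ≠ 0 := by exact_mod_cast hσ0
  have h1 : HasDerivAt σ (deriv σ s) s := (hσ.differentiable one_ne_zero s).hasDerivAt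
  have h2 : HasDerivAt (fun s => u - s) (-1) s := by
    simpa using (hasDerivAt_id s).const_sub u
  have h3 := h2.div h1 hσ0
  have hg : HasDerivAt g (deriv g ((u - s) / σ s)) ((u - s) / σ s) :=
    g.differentiableAt.hasDerivAt
  have h4 := hg.scomp s h3
  have h5 := hasDerivAt_e2πi ((h2.const_mul η).neg)
  have h6 := (h1.ofReal_comp).inv hσ0c
  have h7 := ((h6.const_mul (x u)).mul h4).mul h5
  refine h7.congr_deriv ?_
  simp only [shiftKer, g3w, Complex.real_smul, Function.comp_apply, Pi.div_apply, Pi.neg_apply,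
    Pi.mul_apply, Pi.inv_apply]
  push_cast
  field_simp
  ring

/-- Differentiation under the integral sign. It requires nothing of `x` beyond continuity and
boundedness, since `x` carries no `s` after the substitution. -/
lemma hasDerivAt_adSTFT {σ : ℝ → ℝ} (hσ : ContDiff ℝ 1 σ) (hσpos : ∀ s, 0 < σ s)
    {x : ℝ → ℂ} (hx : Continuous x) (hxb : ∃ C, ∀ s, ‖x s‖ ≤ C) (g : SchwartzMap ℝ ℂ)
    (t η : ℝ) :
    HasDerivAt (fun s => adSTFT σ g x s η)
      ((2 * (π : ℂ) * Complex.I * η - ((deriv σ t / σ t : ℝ) : ℂ)) * adSTFT σ g x t η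
        - ((σ t)⁻¹ : ℝ) * adSTFT σ (deriv g) x t η
        - ((deriv σ t / σ t : ℝ) : ℂ) * adSTFT σ (g3w g) x t η) t := by
  have hσc := hσ.continuous
  have hq0 := quadDecay_schwartz g
  have hq' := quadDecay_deriv g
  have hq3 := quadDecay_g3w g
  have hI0 := integrable_shiftKer hσc hσpos hx hxb hq0 η t
  have hI' := integrable_shiftKer hσc hσpos hx hxb hq' η t
  have hI3 := integrable_shiftKer hσc hσpos hx hxb hq3 η t
  obtain ⟨B0, hB0, hb0⟩ := exists_shiftKer_bound hσc hσpos hxb hq0 η t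
  obtain ⟨B1, hB1, hb1⟩ := exists_shiftKer_bound hσc hσpos hxb hq' η t
  obtain ⟨B3, hB3, hb3⟩ := exists_shiftKer_bound hσc hσpos hxb hq3 η t
  have hσ' : Continuous (deriv σ) := hσ.continuous_deriv le_rfl
  have hcr : Continuous fun s => deriv σ s / σ s := hσ'.div hσc fun s => (hσpos s).ne'
  have hci : Continuous fun s => (σ s)⁻¹ := hσc.inv₀ fun s => (hσpos s).ne'
  have hK := isCompact_Icc (a := t - 1) (b := t + 1)
  have hcrc : Continuous fun s => ((deriv σ s / σ s : ℝ) : ℂ) :=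
    Complex.continuous_ofReal.comp hcr
  obtain ⟨M0, hM0⟩ := hK.exists_bound_of_continuousOn
    (f := fun s => 2 * (π : ℂ) * Complex.I * η - ((deriv σ s / σ s : ℝ) : ℂ))
    (continuous_const.sub hcrc).continuousOn
  obtain ⟨M1, hM1⟩ := hK.exists_bound_of_continuousOn
    (f := fun s => (((σ s)⁻¹ : ℝ) : ℂ)) (Complex.continuous_ofReal.comp hci).continuousOn
  obtain ⟨M3, hM3⟩ := hK.exists_bound_of_continuousOn
    (f := fun s => ((deriv σ s / σ s : ℝ) : ℂ)) hcrc.continuousOn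
  have ht : t ∈ Icc (t - 1) (t + 1) := ⟨by linarith, by linarith⟩
  have hM0' := (norm_nonneg _).trans (hM0 t ht)
  have hM1' := (norm_nonneg _).trans (hM1 t ht)
  have hM3' := (norm_nonneg _).trans (hM3 t ht)
  have main := (hasDerivAt_integral_of_dominated_loc_of_deriv_le (μ := volume) (𝕜 := ℝ)
    (F := fun s u => shiftKer σ x η g s u)
    (F' := fun s u =>
      (2 * (π : ℂ) * Complex.I * η - ((deriv σ s / σ s : ℝ) : ℂ)) * shiftKer σ x η g s u
        - ((σ s)⁻¹ : ℝ) * shiftKer σ x η (deriv g) s u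
        - ((deriv σ s / σ s : ℝ) : ℂ) * shiftKer σ x η (g3w g) s u)
    (x₀ := t) (s := Icc (t - 1) (t + 1))
    (bound := fun u => (M0 * B0 + M1 * B1 + M3 * B3) * (1 + (u - t) ^ 2)⁻¹)
    (Icc_mem_nhds (by linarith) (by linarith))
    (.of_forall fun s => (continuous_shiftKer hx hq0 η s).aestronglyMeasurable)
    hI0
    (((hI0.const_mul _).sub (hI'.const_mul _)).sub (hI3.const_mul _)).aestronglyMeasurable
    (.of_forall fun u s hs => ?_)
    ((integrable_inv_one_add_sq.comp_sub_right t).const_mul _)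
    (.of_forall fun u s _ => hasDerivAt_shiftKer hσ hσpos x g η s u)).2
  · simp only [adSTFT_eq_integral_shiftKer]
    refine main.congr_deriv ?_
    rw [integral_sub (Integrable.sub' (hI0.const_mul _) (hI'.const_mul _)) (hI3.const_mul _),
      integral_sub (hI0.const_mul _) (hI'.const_mul _)]
    simp only [integral_const_mul]
  · have e0 := mul_le_mul (hM0 s hs) (hb0 s hs u) (norm_nonneg _) hM0'
    have e1 := mul_le_mul (hM1 s hs) (hb1 s hs u) (norm_nonneg _) hM1'
    have e3 := mul_le_mul (hM3 s hs) (hb3 s hs u) (norm_nonneg _) hM3'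
    refine (norm_sub_le _ _).trans ((add_le_add (norm_sub_le _ _) le_rfl).trans ?_)
    simp only [norm_mul] at e0 e1 e3 ⊢
    linarith

/-! ### Integration by parts for the chirp kernel -/

lemma integrable_chirp {w : ℝ → ℂ} (hw : QuadDecay w) {s : ℝ} (hs : 0 < s) (a b η : ℝ) :
    Integrable (fun τ : ℝ =>
      e2πi (a * τ + b * τ ^ 2 / 2) * ((s : ℂ))⁻¹ * w (τ / s) * e2πi (-(η * τ))) := by
  have hc := hw.1
  have he := continuous_e2πi
  have h := ((hw.integrable.comp_div hs.ne').norm).const_mul ‖((s : ℂ))⁻¹‖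
  refine h.mono' (Continuous.aestronglyMeasurable (by fun_prop)) (.of_forall fun τ => ?_)
  simp only [norm_mul, norm_e2πi, one_mul, mul_one, le_refl]

/-- Integration by parts: the integral over `ℝ` of the `τ`-derivative of the integrand of the
chirp kernel vanishes. -/
lemma chirpG_relation {σ : ℝ → ℝ} {t : ℝ} (hσ : 0 < σ t) (g : SchwartzMap ℝ ℂ) (a b η : ℝ) :
    2 * (π : ℂ) * Complex.I * (a - η) * chirpG σ g a b t η
      + 2 * (π : ℂ) * Complex.I * b * σ t * chirpG σ (g1w g) a b t η
      + (σ t : ℂ)⁻¹ * chirpG σ (deriv g) a b t η = 0 := by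
  have hσ0c : (σ t : ℂ) ≠ 0 := by exact_mod_cast hσ.ne'
  have hI0 := integrable_chirp (quadDecay_schwartz g) hσ a b η
  have hI1 := integrable_chirp (quadDecay_g1w g) hσ a b η
  have hI' := integrable_chirp (quadDecay_deriv g) hσ a b η
  have hJ0 := hI0.const_mul (2 * (π : ℂ) * Complex.I * (a - η))
  have hJ1 := hI1.const_mul (2 * (π : ℂ) * Complex.I * b * σ t)
  have hJ' := hI'.const_mul (σ t : ℂ)⁻¹
  unfold chirpG
  rw [← integral_const_mul, ← integral_const_mul, ← integral_const_mul,
    ← integral_add hJ0 hJ1, ← integral_add (hJ0.fun_add hJ1) hJ']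
  refine integral_eq_zero_of_hasDerivAt_of_integrable (fun τ => ?_)
    ((hJ0.add hJ1).add hJ') hI0
  have h1 : HasDerivAt (fun τ : ℝ => a * τ + b * τ ^ 2 / 2) (a + b * τ) τ := by
    have := ((hasDerivAt_id τ).const_mul a).add
      ((((hasDerivAt_id τ).pow 2).const_mul b).div_const 2)
    refine this.congr_deriv ?_
    simp
    ring
  have h2 : HasDerivAt (fun τ : ℝ => -(η * τ)) (-η) τ := by
    simpa using (hasDerivAt_id τ).const_mul (-η)
  have h3 : HasDerivAt (fun τ : ℝ => τ / σ t) (1 / σ t) τ := (hasDerivAt_id τ).div_const _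
  have hg : HasDerivAt g (deriv g (τ / σ t)) (τ / σ t) := g.differentiableAt.hasDerivAt
  have h4 := hg.scomp τ h3
  have h5 := (((hasDerivAt_e2πi h1).mul_const (σ t : ℂ)⁻¹).mul h4).mul (hasDerivAt_e2πi h2)
  refine h5.congr_deriv ?_
  simp only [g1w, Complex.real_smul, Function.comp_apply, Pi.mul_apply]
  push_cast
  field_simp
  ring

/-! ### The second-order expansion of `∂_t Ṽ_x` -/

theorem statement15
    (K : ℕ) (hK : 0 < K)
    (A φ : Fin K → ℝ → ℝ)
    (hA2 : ∀ k, ContDiff ℝ 2 (A k))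
    (hAbdd : ∀ k, ∃ C, ∀ s, |A k s| ≤ C)
    (hφ3 : ∀ k, ContDiff ℝ 3 (φ k))
    (hφ''bdd : ∀ k, ∃ C, ∀ s, |deriv (deriv (φ k)) s| ≤ C)
    (hApos : ∀ k s, 0 < A k s)
    (hφ'bd : ∀ k, ∃ c C : ℝ, 0 < c ∧ (∀ s, c ≤ deriv (φ k) s) ∧ ∀ s, deriv (φ k) s ≤ C)
    (hsep : ∃ d, 0 < d ∧ ∀ (j : ℕ) (hj : j + 1 < K) (s : ℝ),
      d ≤ deriv (φ ⟨j + 1, hj⟩) s - deriv (φ ⟨j, Nat.lt_of_succ_lt hj⟩) s)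
    (g : SchwartzMap ℝ ℂ) (hg0 : g 0 ≠ 0)
    (σ : ℝ → ℝ) (hσ : ContDiff ℝ 1 σ) (hσpos : ∀ s, 0 < σ s)
    (x : ℝ → ℂ) (hx : ∀ s, x s = ∑ k, (A k s : ℂ) * e2πi (φ k s))
    (k : Fin K) :
    ∀ (t η : ℝ),
      adSTFTt σ (⇑g) x t η =
        (2 * (π : ℂ) * Complex.I * ((deriv (φ k) t : ℝ) : ℂ) -
            ((deriv σ t / σ t : ℝ) : ℂ)) * adSTFT σ (⇑g) x t η
        + 2 * (π : ℂ) * Complex.I * ((deriv (deriv (φ k)) t : ℝ) : ℂ) * (σ t : ℂ) *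
            adSTFT σ (g1w (⇑g)) x t η
        - ((deriv σ t / σ t : ℝ) : ℂ) * adSTFT σ (g3w (⇑g)) x t η
        + Err1 σ (⇑g) x K A φ k t η := by
  intro t η
  have hxe : x = fun s => ∑ k, (A k s : ℂ) * e2πi (φ k s) := funext hx
  have hxc : Continuous x := by
    rw [hxe]
    refine continuous_finsetSum _ fun j _ => ?_
    exact (Complex.continuous_ofReal.comp (hA2 j).continuous).mul
      (continuous_e2πi.comp (hφ3 j).continuous)
  have hxb : ∃ C, ∀ s, ‖x s‖ ≤ C := by
    choose C hC using hAbdd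
    refine ⟨∑ j, C j, fun s => ?_⟩
    rw [hx]
    refine (norm_sum_le _ _).trans (Finset.sum_le_sum fun j _ => ?_)
    rw [norm_mul, norm_e2πi, mul_one, Complex.norm_real]
    exact hC j s
  have hσ0c : (σ t : ℂ) ≠ 0 := by exact_mod_cast (hσpos t).ne'
  have hder : adSTFTt σ (⇑g) x t η = _ := (hasDerivAt_adSTFT hσ hσpos hxc hxb g t η).deriv
  rw [hder]
  unfold Err1 errW
  -- The `ℓ = k` terms vanish, so the sums over `ℓ ≠ k` extend to all `ℓ`.
  rw [Finset.sum_erase Finset.univ (by simp), Finset.sum_erase Finset.univ (by simp)]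
  have hsum : ∑ ℓ, (A ℓ t : ℂ) * e2πi (φ ℓ t) *
      (2 * (π : ℂ) * Complex.I * (((deriv (φ ℓ) t : ℝ) : ℂ) - η) *
          chirpG σ g (deriv (φ ℓ) t) (deriv (deriv (φ ℓ)) t) t η
        + 2 * (π : ℂ) * Complex.I * ((deriv (deriv (φ ℓ)) t : ℝ) : ℂ) * σ t *
          chirpG σ (g1w g) (deriv (φ ℓ) t) (deriv (deriv (φ ℓ)) t) t η
        + (σ t : ℂ)⁻¹ * chirpG σ (deriv g) (deriv (φ ℓ) t) (deriv (deriv (φ ℓ)) t) t η) = 0 :=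
    Finset.sum_eq_zero fun ℓ _ => by rw [chirpG_relation (hσpos t), mul_zero]
  have hcomb : 2 * (π : ℂ) * Complex.I *
      (∑ ℓ, (A ℓ t : ℂ) * e2πi (φ ℓ t) *
        ((deriv (φ ℓ) t - deriv (φ k) t : ℝ) : ℂ) *
        chirpG σ g (deriv (φ ℓ) t) (deriv (deriv (φ ℓ)) t) t η)
    + 2 * (π : ℂ) * Complex.I * (σ t : ℂ) *
      (∑ ℓ, (A ℓ t : ℂ) * e2πi (φ ℓ t) *
        ((deriv (deriv (φ ℓ)) t - deriv (deriv (φ k)) t : ℝ) : ℂ) *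
        chirpG σ (g1w g) (deriv (φ ℓ) t) (deriv (deriv (φ ℓ)) t) t η)
    - 2 * (π : ℂ) * Complex.I * ((η - deriv (φ k) t : ℝ) : ℂ) *
      (∑ ℓ, (A ℓ t : ℂ) * e2πi (φ ℓ t) *
        chirpG σ g (deriv (φ ℓ) t) (deriv (deriv (φ ℓ)) t) t η)
    + (σ t : ℂ)⁻¹ * (∑ ℓ, (A ℓ t : ℂ) * e2πi (φ ℓ t) *
        chirpG σ (deriv g) (deriv (φ ℓ) t) (deriv (deriv (φ ℓ)) t) t η)
    + 2 * (π : ℂ) * Complex.I * ((deriv (deriv (φ k)) t : ℝ) : ℂ) * (σ t : ℂ) *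
      (∑ ℓ, (A ℓ t : ℂ) * e2πi (φ ℓ t) *
        chirpG σ (g1w g) (deriv (φ ℓ) t) (deriv (deriv (φ ℓ)) t) t η) = 0 := by
    rw [← hsum]
    simp only [Finset.mul_sum, ← Finset.sum_add_distrib, ← Finset.sum_sub_distrib]
    refine Finset.sum_congr rfl fun ℓ _ => ?_
    push_cast
    ring
  rw [div_eq_mul_inv (_ - _) (σ t : ℂ)]
  push_cast at hcomb ⊢
  linear_combination -hcomb

end
end

section
/- (Lemma 2) Let x ∈ 𝒟⁽²⁾ and let g, σ, the transforms Ṽ^w_x, kernels G^w_ℓ, residuals err^w, and the quantities B_k, D_k, E_k, F_k, Err₁, Err₂ be as in the context; fix k ∈ {1,…,K}. For every (t,η) with Ṽ_x(t,η) ≠ 0 and ∂_η(Ṽ^{g₁}_x(t,η)/Ṽ_x(t,η)) ≠ 0, the quantity P₀(t,η) = [∂_η(∂_tṼ_x/Ṽ_x) + (σ'(t)/σ(t)) ∂_η(Ṽ^{g₃}_x/Ṽ_x)] / ∂_η(Ṽ^{g₁}_x/Ṽ_x) satisfies P₀(t,η) = 2πi σ(t) φ''_k(t) + Err₃, where Err₃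 = (Ṽ_x · Err₂ − ∂_ηṼ_x · Err₁) / (Ṽ_x ∂_η Ṽ^{g₁}_x − Ṽ^{g₁}_x ∂_η Ṽ_x). -/
/-!
Dividing by `V = V^g`, the quantity `P₀` is a quotient of frequency derivatives, and the statement
follows by differentiating in `η` one identity (`first_order_identity`):

  `∂_t V + (σ'/σ) V^{u g'} = (2πi φ'_k - σ'/σ) V + 2πi σ φ''_k V^{u g} + Err₁`.

The left side is computed in `adSTFTt_eq`: writing the STFT as an integral over `r = t + τ` puts
all the time dependence into the Schwartz window, so that `∂_t V` is a combination of `V`,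
`V^{g'}` and `V^{u g'}`. The term `V^{g'}` is then decomposed as `Σ x_ℓ G^{g'}_ℓ + err^{g'}`, where
integration by parts (`locFT_chirp_deriv`) turns each chirp kernel `G^{g'}_ℓ` into a combination of
`G^g_ℓ` and `G^{u g}_ℓ` with coefficients `φ'_ℓ - η` and `σ φ''_ℓ`; replacing these coefficients
by those of index `k` produces the sums in `Err₁`.

Differentiation in `η` multiplies the window by `-2πi σ u` (`hasDerivAt_locFT`), hence
`∂_η Err₁ = Err₂` (`hasDerivAt_Err1`). Dividing the identity by `V` near a point where `V ≠ 0`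
removes the constant term after differentiation, and the quotient rule gives `Err₃`.
-/

open MeasureTheory Real Set Filter
open scoped Topology Real

noncomputable section

lemma e2πi_add (a b : ℝ) : e2πi (a + b) = e2πi a * e2πi b := by
  rw [e2πi, e2πi, e2πi, ← Complex.exp_add]
  congr 1; push_cast; ring

lemma HasDerivAt.e2πi {f : ℝ → ℝ} {f' s : ℝ} (hf : HasDerivAt f f' s) :
    HasDerivAt (fun r => e2πi (f r)) (2 * (π : ℂ) * Complex.I * (f' : ℂ) * e2πi (f s)) s := by
  have h := ((hf.ofReal_comp.const_mul (2 * (π : ℂ))).mul_const Complex.I).cexp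
  convert! h using 1
  rw [_root_.e2πi]; ring

/-- The common shape of `adSTFT` and `chirpG`: the Fourier integral of `f` against the window
`w` dilated to scale `s` and normalized in `L¹`. -/
def locFT (f : ℝ → ℂ) (s : ℝ) (w : ℝ → ℂ) (η : ℝ) : ℂ :=
  ∫ τ : ℝ, f τ * (s : ℂ)⁻¹ * w (τ / s) * e2πi (-(η * τ))

lemma integrable_locFT {f : ℝ → ℂ} (hf : Continuous f) {C : ℝ} (hC : ∀ τ, ‖f τ‖ ≤ C)
    {s : ℝ} (hs : 0 < s) {w : ℝ → ℂ} (hw : Integrable w) (η : ℝ) :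
    Integrable (fun τ : ℝ => f τ * (s : ℂ)⁻¹ * w (τ / s) * e2πi (-(η * τ))) := by
  have h1 : Integrable (fun τ : ℝ => w (τ / s)) := hw.comp_div hs.ne'
  have h2 : Continuous (fun τ : ℝ => f τ * (s : ℂ)⁻¹) := by fun_prop
  have h3 := h1.bdd_mul (c := C * ‖(s : ℂ)⁻¹‖) h2.aestronglyMeasurable
    (ae_of_all _ fun τ => by rw [norm_mul]; gcongr; exact hC τ)
  have h4 : Continuous (fun τ : ℝ => e2πi (-(η * τ))) :=
    continuous_e2πi.comp (by fun_prop)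
  exact h3.mul_bdd (c := 1) h4.aestronglyMeasurable
    (ae_of_all _ fun τ => (norm_e2πi _).le)

/-- Differentiating in the frequency multiplies the window by `-2πi s u`. -/
lemma hasDerivAt_locFT {f : ℝ → ℂ} (hf : Continuous f) {C : ℝ} (hC : ∀ τ, ‖f τ‖ ≤ C)
    {s : ℝ} (hs : 0 < s) {w : ℝ → ℂ} (hw : Integrable w) (hw1 : Integrable (g1w w)) (η : ℝ) :
    HasDerivAt (locFT f s w) (-(2 * (π : ℂ) * Complex.I * (s : ℂ)) * locFT f s (g1w w) η) η := by
  have hs' : (s : ℂ) ≠ 0 := by exact_mod_cast hs.ne'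
  have hI := fun η' => integrable_locFT hf hC hs hw1 η'
  have key := hasDerivAt_integral_of_dominated_loc_of_deriv_le (μ := volume) (x₀ := η)
    (s := Set.univ)
    (F := fun η' τ => f τ * (s : ℂ)⁻¹ * w (τ / s) * e2πi (-(η' * τ)))
    (F' := fun η' τ => -(2 * (π : ℂ) * Complex.I * (s : ℂ)) *
      (f τ * (s : ℂ)⁻¹ * g1w w (τ / s) * e2πi (-(η' * τ))))
    (bound := fun τ => ‖-(2 * (π : ℂ) * Complex.I * (s : ℂ)) *
      (f τ * (s : ℂ)⁻¹ * g1w w (τ / s) * e2πi (-(η * τ)))‖)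
    Filter.univ_mem
    (Filter.Eventually.of_forall fun η' =>
      (integrable_locFT hf hC hs hw η').aestronglyMeasurable)
    (integrable_locFT hf hC hs hw η)
    ((hI η).const_mul _).aestronglyMeasurable
    (ae_of_all _ fun τ η' _ => by simp only [norm_mul, norm_e2πi]; exact le_rfl)
    ((hI η).const_mul _).norm
    (ae_of_all _ fun τ η' _ => by
      have h1 : HasDerivAt (fun y : ℝ => -(y * τ)) (-τ) η' := by
        simpa using ((hasDerivAt_id η').mul_const τ).fun_neg
      refine (h1.e2πi.const_mul (f τ * (s : ℂ)⁻¹ * w (τ / s))).congr_deriv ?_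
      simp only [g1w]
      push_cast
      field_simp)
  have h2 := key.2
  rw [integral_const_mul] at h2
  exact h2

/-- Integration by parts against a linear chirp: the window `g'` is expressed through
`g` and `u g`. -/
lemma locFT_chirp_deriv (g : SchwartzMap ℝ ℂ) (hg : Integrable (⇑g))
    (hg' : Integrable (deriv g)) (hg1 : Integrable (g1w g)) {s : ℝ} (hs : 0 < s)
    (a b η : ℝ) :
    locFT (fun τ => e2πi (a * τ + b * τ ^ 2 / 2)) s (deriv g) η =
      -(2 * (π : ℂ) * Complex.I * (s : ℂ)) *
        (((a : ℂ) - (η : ℂ)) * locFT (fun τ => e2πi (a * τ + b * τ ^ 2 / 2)) s g η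
          + (b : ℂ) * (s : ℂ) * locFT (fun τ => e2πi (a * τ + b * τ ^ 2 / 2)) s (g1w g) η) := by
  have hs' : (s : ℂ) ≠ 0 := by exact_mod_cast hs.ne'
  set f : ℝ → ℂ := fun τ => e2πi (a * τ + b * τ ^ 2 / 2) with hf_def
  have hf : Continuous f := continuous_e2πi.comp (by fun_prop)
  have hC : ∀ τ, ‖f τ‖ ≤ 1 := fun τ => (norm_e2πi _).le
  have i0 := integrable_locFT hf hC hs hg η
  have i1 := integrable_locFT hf hC hs hg1 η
  have i' := integrable_locFT hf hC hs hg' η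
  have hd : ∀ τ : ℝ, HasDerivAt (fun τ : ℝ => (s : ℂ) *
        (f τ * (s : ℂ)⁻¹ * g (τ / s) * e2πi (-(η * τ))))
      (f τ * (s : ℂ)⁻¹ * deriv g (τ / s) * e2πi (-(η * τ))
        + (2 * (π : ℂ) * Complex.I * (s : ℂ)) *
          (((a : ℂ) - (η : ℂ)) * (f τ * (s : ℂ)⁻¹ * g (τ / s) * e2πi (-(η * τ)))
          + (b : ℂ) * (s : ℂ) * (f τ * (s : ℂ)⁻¹ * g1w g (τ / s) * e2πi (-(η * τ))))) τ := by
    intro τ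
    have e1 : HasDerivAt (fun τ : ℝ => a * τ + b * τ ^ 2 / 2) (a + b * τ) τ := by
      have := ((hasDerivAt_id τ).const_mul a).add
        ((((hasDerivAt_id τ).pow 2).const_mul b).div_const 2)
      refine this.congr_deriv ?_
      simp; ring
    have e2 : HasDerivAt (fun y : ℝ => -(η * y)) (-η) τ := by
      simpa using ((hasDerivAt_id τ).const_mul η).fun_neg
    have e3 : HasDerivAt (fun y : ℝ => g (y / s)) (((s⁻¹ : ℝ) : ℂ) * deriv g (τ / s)) τ := by
      have h1 : HasDerivAt (⇑g) (deriv g (τ / s)) (τ / s) := g.differentiableAt.hasDerivAt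
      have h2 : HasDerivAt (fun y : ℝ => y / s) (s⁻¹) τ := by
        simpa using (hasDerivAt_id τ).div_const s
      have h3 := h1.scomp τ h2
      refine h3.congr_deriv ?_
      rw [Complex.real_smul]
    refine ((((e1.e2πi.mul_const ((s : ℂ)⁻¹)).mul e3).mul e2.e2πi).const_mul
      (s : ℂ)).congr_deriv ?_
    simp only [hf_def, g1w, Pi.mul_apply]
    push_cast
    field_simp
    ring
  have i01 : Integrable (fun τ : ℝ =>
      ((a : ℂ) - (η : ℂ)) * (f τ * (s : ℂ)⁻¹ * g (τ / s) * e2πi (-(η * τ)))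
        + (b : ℂ) * (s : ℂ) * (f τ * (s : ℂ)⁻¹ * g1w g (τ / s) * e2πi (-(η * τ)))) :=
    (i0.const_mul _).add (i1.const_mul _)
  have hz := integral_eq_zero_of_hasDerivAt_of_integrable hd
    (i'.add (i01.const_mul _)) (i0.const_mul _)
  rw [integral_add i' (i01.const_mul _),
    integral_const_mul, integral_add (i0.const_mul _) (i1.const_mul _),
    integral_const_mul, integral_const_mul] at hz
  unfold locFT
  linear_combination hz

/-! ### Derivative of the adaptive STFT in time -/

lemma schwartz_sq_decay (g : SchwartzMap ℝ ℂ) (n : ℕ) :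
    ∃ C, ∀ u : ℝ, (1 + u ^ 2) * (|u| ^ n * ‖g u‖) ≤ C := by
  obtain ⟨C₀, -, h0⟩ := g.decay n 0
  obtain ⟨C₂, -, h2⟩ := g.decay (n + 2) 0
  refine ⟨C₀ + C₂, fun u => ?_⟩
  have h0 := h0 u
  have h2 := h2 u
  simp only [norm_iteratedFDeriv_zero, Real.norm_eq_abs] at h0 h2
  calc (1 + u ^ 2) * (|u| ^ n * ‖g u‖) = |u| ^ n * ‖g u‖ + |u| ^ (n + 2) * ‖g u‖ := by
        rw [← sq_abs u]; ring
    _ ≤ _ := add_le_add h0 h2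

lemma schwartz_deriv_coe (g : SchwartzMap ℝ ℂ) :
    ∃ g' : SchwartzMap ℝ ℂ, (⇑g' : ℝ → ℂ) = deriv g :=
  ⟨SchwartzMap.derivCLM ℂ ℂ g, funext fun u => SchwartzMap.derivCLM_apply ℂ g u⟩

lemma schwartz_integrable_mul_pow (g : SchwartzMap ℝ ℂ) (n : ℕ) :
    Integrable (fun u : ℝ => (u : ℂ) ^ n * g u) := by
  refine (g.integrable_pow_mul volume n).mono
    (Continuous.aestronglyMeasurable (by have := g.continuous; fun_prop))
    (ae_of_all _ fun u => by simp)

lemma g1w_g1w (g : ℝ → ℂ) : g1w (g1w g) = g2w g := by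
  funext u; simp only [g1w, g2w]; ring

/-- The change of variables `r = t + τ` moves the time dependence from the bounded
signal, whose derivative may be unbounded, to the rapidly decaying window, which makes
differentiation under the integral sign possible. -/
lemma adSTFTt_eq {x : ℝ → ℂ} (hx : Continuous x) {X : ℝ} (hX : ∀ s, ‖x s‖ ≤ X)
    (g : SchwartzMap ℝ ℂ) {σ : ℝ → ℝ} (hσ : ContDiff ℝ 1 σ) (hσpos : ∀ s, 0 < σ s) (t η : ℝ) :
    adSTFTt σ g x t η = (2 * (π : ℂ) * Complex.I * (η : ℂ) - ((deriv σ t / σ t : ℝ) : ℂ))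
        * adSTFT σ g x t η
      - adSTFT σ (deriv g) x t η / (σ t : ℂ)
      - ((deriv σ t / σ t : ℝ) : ℂ) * adSTFT σ (g3w g) x t η := by
  obtain ⟨g', hg'⟩ := schwartz_deriv_coe g
  have hσc : ∀ s, (σ s : ℂ) ≠ 0 := fun s => by exact_mod_cast (hσpos s).ne'
  have hX0 : 0 ≤ X := (norm_nonneg _).trans (hX 0)
  -- The three coefficients of `g`, `g'` and `u g'` in the time derivative of the integrand.
  set c₁ : ℝ → ℂ := fun s => (2 * (π : ℂ) * Complex.I * (η : ℂ) - ((deriv σ s : ℝ) : ℂ) / (σ s : ℂ))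
    * (σ s : ℂ)⁻¹ with hc₁
  set c₂ : ℝ → ℂ := fun s => -((σ s : ℂ)⁻¹ * (σ s : ℂ)⁻¹) with hc₂
  set c₃ : ℝ → ℂ := fun s => -(((deriv σ s : ℝ) : ℂ) / (σ s : ℂ) * (σ s : ℂ)⁻¹) with hc₃
  have hσ0 : Continuous σ := hσ.continuous
  have hσ1 : Continuous (deriv σ) := hσ.continuous_deriv le_rfl
  have hinv : Continuous fun s => (σ s : ℂ)⁻¹ :=
    (Complex.continuous_ofReal.comp hσ0).inv₀ hσc
  have hdσ : Continuous fun s => ((deriv σ s : ℝ) : ℂ) := Complex.continuous_ofReal.comp hσ1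
  have hc₁c : Continuous c₁ := by simp only [hc₁, div_eq_mul_inv]; fun_prop
  have hc₂c : Continuous c₂ := by simp only [hc₂]; fun_prop
  have hc₃c : Continuous c₃ := by simp only [hc₃, div_eq_mul_inv]; fun_prop
  obtain ⟨D₁, hD₁⟩ := schwartz_sq_decay g 0
  obtain ⟨D₂, hD₂⟩ := schwartz_sq_decay g' 0
  obtain ⟨D₃, hD₃⟩ := schwartz_sq_decay g' 1
  set M := σ t + 1 with hM
  have hM0 : 0 < M := by have := hσpos t; positivity
  set N₁ := ‖c₁ t‖ + 1 with hN₁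
  set N₂ := ‖c₂ t‖ + 1 with hN₂
  set N₃ := ‖c₃ t‖ + 1 with hN₃
  have hS : ∀ᶠ s in 𝓝 t, |s - t| < 1 ∧ σ s < M ∧ ‖c₁ s‖ < N₁ ∧ ‖c₂ s‖ < N₂ ∧ ‖c₃ s‖ < N₃ := by
    have a0 : ∀ᶠ s in 𝓝 t, |s - t| < 1 :=
      ContinuousAt.eventually_lt (f := fun s => |s - t|) (g := fun _ => (1 : ℝ))
        (by fun_prop) continuousAt_const (by simp)
    have a1 : ∀ᶠ s in 𝓝 t, σ s < M :=
      hσ0.continuousAt.eventually_lt continuousAt_const (by simp [hM])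
    have a2 : ∀ᶠ s in 𝓝 t, ‖c₁ s‖ < N₁ :=
      hc₁c.norm.continuousAt.eventually_lt continuousAt_const (by simp [hN₁])
    have a3 : ∀ᶠ s in 𝓝 t, ‖c₂ s‖ < N₂ :=
      hc₂c.norm.continuousAt.eventually_lt continuousAt_const (by simp [hN₂])
    have a4 : ∀ᶠ s in 𝓝 t, ‖c₃ s‖ < N₃ :=
      hc₃c.norm.continuousAt.eventually_lt continuousAt_const (by simp [hN₃])
    filter_upwards [a0, a1, a2, a3, a4] with s h0 h1 h2 h3 h4 using ⟨h0, h1, h2, h3, h4⟩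
  set F : ℝ → ℝ → ℂ := fun s r =>
    x r * (σ s : ℂ)⁻¹ * g ((r - s) / σ s) * e2πi (-(η * (r - s))) with hF
  set F' : ℝ → ℝ → ℂ := fun s r => x r * e2πi (-(η * (r - s))) *
    (c₁ s * g ((r - s) / σ s) + c₂ s * g' ((r - s) / σ s)
      + c₃ s * ((((r - s) / σ s : ℝ) : ℂ) * g' ((r - s) / σ s))) with hF'
  have hFeq : ∀ s, adSTFT σ g x s η = ∫ r, F s r := by
    intro s
    rw [← integral_add_left_eq_self _ s]
    simp only [hF, add_sub_cancel_left, adSTFT]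
  have hgc := g.continuous
  have hgc' := g'.continuous
  have hec := continuous_e2πi
  have hFm : ∀ s, Continuous (F s) := fun s => by simp only [hF]; fun_prop
  have hFm' : Continuous (F' t) := by simp only [hF']; fun_prop
  have hFint : Integrable (F t) := by
    have h := (integrable_locFT (f := fun τ => x (t + τ)) (by fun_prop) (fun τ => hX _)
      (hσpos t) g.integrable η).comp_sub_right t
    simpa [hF] using h
  -- For `|s - t| < 1` and `σ s < M`, the point `u = (r - s) / σ s` satisfies
  -- `1 + (r - t)² ≤ (3 + 2 M²) (1 + u²)`, so quadratic decay in `u` is quadratic decay in `r`.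
  have hbound : ∀ᵐ r, ∀ s ∈ {s | |s - t| < 1 ∧ σ s < M ∧ ‖c₁ s‖ < N₁ ∧ ‖c₂ s‖ < N₂ ∧
      ‖c₃ s‖ < N₃}, ‖F' s r‖ ≤
        X * (N₁ * D₁ + N₂ * D₂ + N₃ * D₃) * (3 + 2 * M ^ 2) * (1 + (r - t) ^ 2)⁻¹ := by
    refine ae_of_all _ fun r s ⟨b0, b1, b2, b3, b4⟩ => ?_
    set u := (r - s) / σ s with hu
    have hru : r - s = σ s * u := by rw [hu]; field_simp [(hσpos s).ne']
    have hw : 1 + (r - t) ^ 2 ≤ (3 + 2 * M ^ 2) * (1 + u ^ 2) := by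
      have q1 : (r - t) ^ 2 ≤ 2 * (r - s) ^ 2 + 2 * (s - t) ^ 2 := by
        nlinarith [sq_nonneg ((r - s) - (s - t))]
      have q2 : (s - t) ^ 2 ≤ 1 := by
        rw [← sq_abs]; nlinarith [abs_nonneg (s - t)]
      have q3 : (r - s) ^ 2 ≤ M ^ 2 * u ^ 2 := by
        rw [hru, mul_pow]
        gcongr
        exact (hσpos s).le
      nlinarith [sq_nonneg u, sq_nonneg M]
    have hH : (1 + u ^ 2) * (N₁ * ‖g u‖ + N₂ * ‖g' u‖ + N₃ * (|u| * ‖g' u‖)) ≤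
        N₁ * D₁ + N₂ * D₂ + N₃ * D₃ := by
      have d1 := hD₁ u
      have d2 := hD₂ u
      have d3 := hD₃ u
      simp only [pow_zero, one_mul, pow_one] at d1 d2 d3
      have n1 : 0 ≤ N₁ := by positivity
      have n2 : 0 ≤ N₂ := by positivity
      have n3 : 0 ≤ N₃ := by positivity
      nlinarith [mul_le_mul_of_nonneg_left d1 n1, mul_le_mul_of_nonneg_left d2 n2,
        mul_le_mul_of_nonneg_left d3 n3]
    have hn : ‖F' s r‖ ≤ X * (N₁ * ‖g u‖ + N₂ * ‖g' u‖ + N₃ * (|u| * ‖g' u‖)) := by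
      simp only [hF', norm_mul, norm_e2πi, mul_one, ← hu]
      gcongr
      · exact hX r
      · refine (norm_add₃_le).trans ?_
        simp only [norm_mul, Complex.norm_real, Real.norm_eq_abs]
        gcongr
    have hp : 0 < 1 + (r - t) ^ 2 := by positivity
    rw [← div_eq_mul_inv, le_div_iff₀ hp]
    set H := N₁ * ‖g u‖ + N₂ * ‖g' u‖ + N₃ * (|u| * ‖g' u‖) with hHdef
    have hH0 : 0 ≤ H := by positivity
    calc ‖F' s r‖ * (1 + (r - t) ^ 2) ≤ (X * H) * ((3 + 2 * M ^ 2) * (1 + u ^ 2)) := by gcongr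
      _ = X * ((1 + u ^ 2) * H) * (3 + 2 * M ^ 2) := by ring
      _ ≤ _ := by gcongr
  have hdiff : ∀ r s, HasDerivAt (F · r) (F' s r) s := by
    intro r s
    have p0 : HasDerivAt σ (deriv σ s) s :=
      (hσ.differentiable one_ne_zero).differentiableAt.hasDerivAt
    have p1 : HasDerivAt (fun s => (σ s : ℂ)⁻¹) (-((deriv σ s : ℝ) : ℂ) / (σ s : ℂ) ^ 2) s :=
      p0.ofReal_comp.inv (hσc s)
    have p2 : HasDerivAt (fun s => (r - s) / σ s)
        ((-1 * σ s - (r - s) * deriv σ s) / σ s ^ 2) s :=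
      (((hasDerivAt_id s).const_sub r)).div p0 (hσpos s).ne'
    have p3 : HasDerivAt (⇑g) (g' ((r - s) / σ s)) ((r - s) / σ s) := by
      rw [hg']; exact g.differentiableAt.hasDerivAt
    have p4 := p3.scomp s p2
    have p5 : HasDerivAt (fun s => -(η * (r - s))) η s := by
      simpa using (((hasDerivAt_id s).const_sub r).const_mul η).fun_neg
    refine (((p1.const_mul (x r)).mul p4).mul p5.e2πi).congr_deriv ?_
    simp only [hF', hc₁, hc₂, hc₃, Pi.mul_apply, Function.comp_apply, Complex.real_smul]
    have := hσc s
    push_cast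
    field_simp
    ring
  have hbi : Integrable (fun r : ℝ =>
      X * (N₁ * D₁ + N₂ * D₂ + N₃ * D₃) * (3 + 2 * M ^ 2) * (1 + (r - t) ^ 2)⁻¹) :=
    (integrable_inv_one_add_sq.comp_sub_right t).const_mul _
  have key := (hasDerivAt_integral_of_dominated_loc_of_deriv_le (μ := volume) (x₀ := t)
    (F := F) (F' := F') hS (Filter.Eventually.of_forall fun s => (hFm s).aestronglyMeasurable)
    hFint hFm'.aestronglyMeasurable hbound hbi (ae_of_all _ fun r s _ => hdiff r s)).2
  have hfun : (fun s => adSTFT σ g x s η) = fun s => ∫ r, F s r := funext hFeq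
  rw [adSTFTt, hfun, key.deriv, ← integral_add_left_eq_self _ t]
  -- Back in the variable `τ = r - t`, the integral splits into the three transforms.
  have hxc : Continuous fun τ => x (t + τ) := by fun_prop
  have i0 := integrable_locFT hxc (fun τ => hX _) (hσpos t) g.integrable η
  have i1 := integrable_locFT hxc (fun τ => hX _) (hσpos t) g'.integrable η
  have hg3 : Integrable (g1w g') := by simpa [g1w] using! schwartz_integrable_mul_pow g' 1
  have i3 := integrable_locFT hxc (fun τ => hX _) (hσpos t) hg3 η
  have hg3w : g3w g = g1w g' := by rw [hg']; rfl
  rw [hg3w, ← hg']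
  have i01 : Integrable (fun τ : ℝ =>
      (2 * (π : ℂ) * Complex.I * (η : ℂ) - ((deriv σ t / σ t : ℝ) : ℂ))
          * (x (t + τ) * (σ t : ℂ)⁻¹ * g (τ / σ t) * e2πi (-(η * τ)))
        - x (t + τ) * (σ t : ℂ)⁻¹ * g' (τ / σ t) * e2πi (-(η * τ)) / (σ t : ℂ)) :=
    (i0.const_mul _).sub (i1.div_const _)
  simp only [adSTFT]
  rw [← integral_div, ← integral_const_mul, ← integral_const_mul,
    ← integral_sub (i0.const_mul _) (i1.div_const _),
    ← integral_sub i01 (i3.const_mul _)]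
  refine integral_congr_ae (ae_of_all _ fun τ => ?_)
  simp only [hF', hc₁, hc₂, hc₃, add_sub_cancel_left, g1w]
  have := hσc t
  push_cast
  field_simp
  ring

/-! ### The first-order identity and its derivative in frequency -/

/-- The identity behind the theorem: after compensation by `V^{u g'}`, the time derivative of the
STFT is an affine combination of `V^g` and `V^{u g}` up to the error `Err₁`. Away from index `k`
the sums measure the frequency and chirp-rate mismatch of the other components. -/
lemma first_order_identity {x : ℝ → ℂ} (hx : Continuous x) {X : ℝ} (hX : ∀ s, ‖x s‖ ≤ X)
    (g : SchwartzMap ℝ ℂ) {σ : ℝ → ℝ} (hσ : ContDiff ℝ 1 σ) (hσpos : ∀ s, 0 < σ s)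
    {K : ℕ} (A φ : Fin K → ℝ → ℝ) (k : Fin K) (t η : ℝ) :
    adSTFTt σ g x t η + ((deriv σ t / σ t : ℝ) : ℂ) * adSTFT σ (g3w g) x t η =
      (2 * (π : ℂ) * Complex.I * ((deriv (φ k) t : ℝ) : ℂ) - ((deriv σ t / σ t : ℝ) : ℂ))
        * adSTFT σ g x t η
      + 2 * (π : ℂ) * Complex.I * (σ t : ℂ) * ((deriv (deriv (φ k)) t : ℝ) : ℂ)
        * adSTFT σ (g1w g) x t η
      + Err1 σ g x K A φ k t η := by
  have hσc : (σ t : ℂ) ≠ 0 := by exact_mod_cast (hσpos t).ne'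
  obtain ⟨g', hg'⟩ := schwartz_deriv_coe g
  have hg1 : Integrable (g1w g) := by simpa [g1w] using! schwartz_integrable_mul_pow g 1
  have hgd : Integrable (deriv g) := by rw [← hg']; exact g'.integrable
  have hG := fun ℓ => locFT_chirp_deriv g g.integrable hgd hg1 (hσpos t) (deriv (φ ℓ) t)
    (deriv (deriv (φ ℓ)) t) η
  change ∀ ℓ, chirpG σ (deriv g) (deriv (φ ℓ) t) (deriv (deriv (φ ℓ)) t) t η =
    -(2 * (π : ℂ) * Complex.I * (σ t : ℂ)) *
      ((((deriv (φ ℓ) t : ℝ) : ℂ) - (η : ℂ))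
          * chirpG σ g (deriv (φ ℓ) t) (deriv (deriv (φ ℓ)) t) t η
        + ((deriv (deriv (φ ℓ)) t : ℝ) : ℂ) * (σ t : ℂ)
          * chirpG σ (g1w g) (deriv (φ ℓ) t) (deriv (deriv (φ ℓ)) t) t η) at hG
  rw [adSTFTt_eq hx hX g hσ hσpos]
  unfold Err1 errW
  rw [Finset.sum_erase _ (by simp), Finset.sum_erase _ (by simp)]
  simp only [hG]
  set a : Fin K → ℂ := fun ℓ => (A ℓ t : ℂ) * e2πi (φ ℓ t) with ha
  set G0 : Fin K → ℂ := fun ℓ => chirpG σ g (deriv (φ ℓ) t) (deriv (deriv (φ ℓ)) t) t η with hG0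
  set G1 : Fin K → ℂ := fun ℓ =>
    chirpG σ (g1w g) (deriv (φ ℓ) t) (deriv (deriv (φ ℓ)) t) t η with hG1
  have s1 : ∑ ℓ, a ℓ * ((deriv (φ ℓ) t - deriv (φ k) t : ℝ) : ℂ) * G0 ℓ =
      ∑ ℓ, a ℓ * ((deriv (φ ℓ) t : ℝ) : ℂ) * G0 ℓ
        - ((deriv (φ k) t : ℝ) : ℂ) * ∑ ℓ, a ℓ * G0 ℓ := by
    rw [Finset.mul_sum, ← Finset.sum_sub_distrib]
    exact Finset.sum_congr rfl fun ℓ _ => by push_cast; ring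
  have s2 : ∑ ℓ, a ℓ * ((deriv (deriv (φ ℓ)) t - deriv (deriv (φ k)) t : ℝ) : ℂ) * G1 ℓ =
      ∑ ℓ, a ℓ * ((deriv (deriv (φ ℓ)) t : ℝ) : ℂ) * G1 ℓ
        - ((deriv (deriv (φ k)) t : ℝ) : ℂ) * ∑ ℓ, a ℓ * G1 ℓ := by
    rw [Finset.mul_sum, ← Finset.sum_sub_distrib]
    exact Finset.sum_congr rfl fun ℓ _ => by push_cast; ring
  have s3 : ∑ ℓ, a ℓ * (-(2 * (π : ℂ) * Complex.I * (σ t : ℂ)) *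
      ((((deriv (φ ℓ) t : ℝ) : ℂ) - (η : ℂ)) * G0 ℓ
        + ((deriv (deriv (φ ℓ)) t : ℝ) : ℂ) * (σ t : ℂ) * G1 ℓ)) =
      -(2 * (π : ℂ) * Complex.I * (σ t : ℂ)) *
        (∑ ℓ, a ℓ * ((deriv (φ ℓ) t : ℝ) : ℂ) * G0 ℓ - (η : ℂ) * ∑ ℓ, a ℓ * G0 ℓ
          + (σ t : ℂ) * ∑ ℓ, a ℓ * ((deriv (deriv (φ ℓ)) t : ℝ) : ℂ) * G1 ℓ) := by
    rw [Finset.mul_sum, Finset.mul_sum, ← Finset.sum_sub_distrib, ← Finset.sum_add_distrib,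
      Finset.mul_sum]
    exact Finset.sum_congr rfl fun ℓ _ => by ring
  rw [s1, s2, s3]
  push_cast
  field_simp
  ring

lemma hasDerivAt_adSTFT_s16 {x : ℝ → ℂ} (hx : Continuous x) {X : ℝ} (hX : ∀ s, ‖x s‖ ≤ X)
    {σ : ℝ → ℝ} (hσpos : ∀ s, 0 < σ s) {w : ℝ → ℂ} (hw : Integrable w)
    (hw1 : Integrable (g1w w)) (t η : ℝ) :
    HasDerivAt (fun η' => adSTFT σ w x t η')
      (-(2 * (π : ℂ) * Complex.I * (σ t : ℂ)) * adSTFT σ (g1w w) x t η) η :=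
  hasDerivAt_locFT (f := fun τ => x (t + τ)) (by fun_prop) (fun τ => hX _) (hσpos t) hw hw1 η

lemma hasDerivAt_sum_chirpG {ι : Type*} (S : Finset ι) (c : ι → ℂ) (a b : ι → ℝ)
    {σ : ℝ → ℝ} (hσpos : ∀ s, 0 < σ s) {w : ℝ → ℂ} (hw : Integrable w)
    (hw1 : Integrable (g1w w)) (t η : ℝ) :
    HasDerivAt (fun η' => ∑ ℓ ∈ S, c ℓ * chirpG σ w (a ℓ) (b ℓ) t η')
      (-(2 * (π : ℂ) * Complex.I * (σ t : ℂ))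
        * ∑ ℓ ∈ S, c ℓ * chirpG σ (g1w w) (a ℓ) (b ℓ) t η) η := by
  have h : ∀ ℓ, HasDerivAt (fun η' => chirpG σ w (a ℓ) (b ℓ) t η')
      (-(2 * (π : ℂ) * Complex.I * (σ t : ℂ)) * chirpG σ (g1w w) (a ℓ) (b ℓ) t η) η := fun ℓ =>
    hasDerivAt_locFT (f := fun τ => e2πi (a ℓ * τ + b ℓ * τ ^ 2 / 2))
      (continuous_e2πi.comp (by fun_prop)) (fun τ => (norm_e2πi _).le) (hσpos t) hw hw1 η
  refine (HasDerivAt.fun_sum fun ℓ _ => (h ℓ).const_mul (c ℓ)).congr_deriv ?_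
  rw [Finset.mul_sum]
  exact Finset.sum_congr rfl fun ℓ _ => by ring

lemma hasDerivAt_errW {x : ℝ → ℂ} (hx : Continuous x) {X : ℝ} (hX : ∀ s, ‖x s‖ ≤ X)
    {σ : ℝ → ℝ} (hσpos : ∀ s, 0 < σ s) {w : ℝ → ℂ} (hw : Integrable w)
    (hw1 : Integrable (g1w w)) {K : ℕ} (A φ : Fin K → ℝ → ℝ) (t η : ℝ) :
    HasDerivAt (fun η' => errW σ w K A φ x t η')
      (-(2 * (π : ℂ) * Complex.I * (σ t : ℂ)) * errW σ (g1w w) K A φ x t η) η := by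
  refine ((hasDerivAt_adSTFT_s16 hx hX hσpos hw hw1 t η).sub
    (hasDerivAt_sum_chirpG Finset.univ (fun ℓ => (A ℓ t : ℂ) * e2πi (φ ℓ t))
      (fun ℓ => deriv (φ ℓ) t) (fun ℓ => deriv (deriv (φ ℓ)) t) hσpos hw hw1 t η)).congr_deriv ?_
  unfold errW
  ring

/-- `Err₂` is the frequency derivative of `Err₁`. -/
lemma hasDerivAt_Err1 {x : ℝ → ℂ} (hx : Continuous x) {X : ℝ} (hX : ∀ s, ‖x s‖ ≤ X)
    (g : SchwartzMap ℝ ℂ) {σ : ℝ → ℝ} (hσpos : ∀ s, 0 < σ s)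
    {K : ℕ} (A φ : Fin K → ℝ → ℝ) (k : Fin K) (t η : ℝ) :
    HasDerivAt (fun η' => Err1 σ g x K A φ k t η') (Err2 σ g x K A φ k t η) η := by
  have hσc : (σ t : ℂ) ≠ 0 := by exact_mod_cast (hσpos t).ne'
  obtain ⟨g', hg'⟩ := schwartz_deriv_coe g
  have w0 : Integrable (⇑g) := g.integrable
  have w1 : Integrable (g1w g) := by simpa [g1w] using! schwartz_integrable_mul_pow g 1
  have w2 : Integrable (g1w (g1w g)) := by
    rw [g1w_g1w]; exact schwartz_integrable_mul_pow g 2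
  have wd0 : Integrable (deriv g) := by rw [← hg']; exact g'.integrable
  have wd1 : Integrable (g1w (deriv g)) := by
    rw [← hg']; simpa [g1w] using! schwartz_integrable_mul_pow g' 1
  have hB := hasDerivAt_sum_chirpG (Finset.univ.erase k)
    (fun ℓ => (A ℓ t : ℂ) * e2πi (φ ℓ t) * ((deriv (φ ℓ) t - deriv (φ k) t : ℝ) : ℂ))
    (fun ℓ => deriv (φ ℓ) t) (fun ℓ => deriv (deriv (φ ℓ)) t) hσpos w0 w1 t η
  have hD := hasDerivAt_sum_chirpG (Finset.univ.erase k)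
    (fun ℓ => (A ℓ t : ℂ) * e2πi (φ ℓ t)
      * ((deriv (deriv (φ ℓ)) t - deriv (deriv (φ k)) t : ℝ) : ℂ))
    (fun ℓ => deriv (φ ℓ) t) (fun ℓ => deriv (deriv (φ ℓ)) t) hσpos w1 w2 t η
  have h0 := hasDerivAt_errW hx hX hσpos w0 w1 A φ t η
  have h1 := hasDerivAt_errW hx hX hσpos w1 w2 A φ t η
  have hd := hasDerivAt_errW hx hX hσpos wd0 wd1 A φ t η
  have hη : HasDerivAt (fun η' : ℝ => 2 * (π : ℂ) * Complex.I * ((η' - deriv (φ k) t : ℝ) : ℂ))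
      (2 * (π : ℂ) * Complex.I) η := by
    simpa using ((hasDerivAt_id η).sub_const (deriv (φ k) t)).ofReal_comp.const_mul
      (2 * (π : ℂ) * Complex.I)
  have hg3 : g1w (deriv g) = g3w g := rfl
  rw [g1w_g1w] at hD h1
  rw [hg3] at hd
  refine (((((hB.const_mul (2 * (π : ℂ) * Complex.I)).add
    (hD.const_mul (2 * (π : ℂ) * Complex.I * (σ t : ℂ)))).add (hη.mul h0)).sub
    (hd.div_const (σ t : ℂ))).sub
    (h1.const_mul (2 * (π : ℂ) * Complex.I * ((deriv (deriv (φ k)) t : ℝ) : ℂ)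
      * (σ t : ℂ)))).congr_deriv ?_
  unfold Err2
  field_simp
  ring_nf
  simp only [Complex.I_sq]
  ring_nf

theorem statement16
    (K : ℕ) (hK : 0 < K)
    (A φ : Fin K → ℝ → ℝ)
    (hA2 : ∀ k, ContDiff ℝ 2 (A k))
    (hAbdd : ∀ k, ∃ C, ∀ s, |A k s| ≤ C)
    (hφ3 : ∀ k, ContDiff ℝ 3 (φ k))
    (hφ''bdd : ∀ k, ∃ C, ∀ s, |deriv (deriv (φ k)) s| ≤ C)
    (hApos : ∀ k s, 0 < A k s)
    (hφ'bd : ∀ k, ∃ c C : ℝ, 0 < c ∧ (∀ s, c ≤ deriv (φ k) s) ∧ ∀ s, deriv (φ k) s ≤ C)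
    (hsep : ∃ d, 0 < d ∧ ∀ (j : ℕ) (hj : j + 1 < K) (s : ℝ),
      d ≤ deriv (φ ⟨j + 1, hj⟩) s - deriv (φ ⟨j, Nat.lt_of_succ_lt hj⟩) s)
    (g : SchwartzMap ℝ ℂ) (hg0 : g 0 ≠ 0)
    (σ : ℝ → ℝ) (hσ : ContDiff ℝ 1 σ) (hσpos : ∀ s, 0 < σ s)
    (x : ℝ → ℂ) (hx : ∀ s, x s = ∑ k, (A k s : ℂ) * e2πi (φ k s))
    (k : Fin K) :
    ∀ (t η : ℝ), adSTFT σ (⇑g) x t η ≠ 0 →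
      deriv (fun η' => adSTFT σ (g1w (⇑g)) x t η' / adSTFT σ (⇑g) x t η') η ≠ 0 →
      P0 σ (⇑g) x t η =
        2 * (π : ℂ) * Complex.I * (σ t : ℂ) * ((deriv (deriv (φ k)) t : ℝ) : ℂ)
        + Err3 σ (⇑g) x K A φ k t η := by

  intro t η hV hden
  have hxc : Continuous x := by
    have : x = fun s => ∑ k, (A k s : ℂ) * e2πi (φ k s) := funext hx
    rw [this]
    refine continuous_finsetSum _ fun k _ => ?_
    have h1 := (hA2 k).continuous
    have h2 := continuous_e2πi.comp (hφ3 k).continuous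
    exact (Complex.continuous_ofReal.comp h1).mul h2
  obtain ⟨X, hX⟩ : ∃ X, ∀ s, ‖x s‖ ≤ X := by
    choose C hC using hAbdd
    refine ⟨∑ k, C k, fun s => ?_⟩
    rw [hx]
    refine norm_sum_le_of_le _ fun k _ => ?_
    rw [norm_mul, norm_e2πi, mul_one, Complex.norm_real]
    exact hC k s
  obtain ⟨g', hg'⟩ := schwartz_deriv_coe g
  have w1 : Integrable (g1w g) := by simpa [g1w] using! schwartz_integrable_mul_pow g 1
  have w2 : Integrable (g1w (g1w g)) := by
    rw [g1w_g1w]; exact schwartz_integrable_mul_pow g 2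
  have w3 : Integrable (g3w g) := by
    have h : g3w g = g1w g' := by rw [hg']; rfl
    rw [h]; simpa [g1w] using! schwartz_integrable_mul_pow g' 1
  have w4 : Integrable (g1w (g3w g)) := by
    have h : g1w (g3w g) = g1w (g1w g') := by rw [hg']; rfl
    rw [h, g1w_g1w]; exact schwartz_integrable_mul_pow g' 2
  have d0 := (hasDerivAt_adSTFT_s16 hxc hX hσpos g.integrable w1 t η).differentiableAt.hasDerivAt
  have d1 := (hasDerivAt_adSTFT_s16 hxc hX hσpos w1 w2 t η).differentiableAt.hasDerivAt
  have d3 := hasDerivAt_adSTFT_s16 hxc hX hσpos w3 w4 t η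
  have dE := hasDerivAt_Err1 hxc hX g hσpos A φ k t η
  have q1 := d1.fun_div d0 hV
  have q3 := d3.fun_div d0 hV
  have qE := dE.fun_div d0 hV
  set c : ℂ := 2 * (π : ℂ) * Complex.I * (σ t : ℂ) * ((deriv (deriv (φ k)) t : ℝ) : ℂ) with hc
  set ρ : ℂ := ((deriv σ t / σ t : ℝ) : ℂ) with hρ
  -- The first-order identity divided by `V`, valid where `V` does not vanish.
  have hloc : (fun η' => adSTFTt σ g x t η' / adSTFT σ g x t η') =ᶠ[𝓝 η]
      fun η' => ((2 * (π : ℂ) * Complex.I * ((deriv (φ k) t : ℝ) : ℂ) - ρ)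
        + c * (adSTFT σ (g1w g) x t η' / adSTFT σ g x t η')
        + Err1 σ g x K A φ k t η' / adSTFT σ g x t η')
        - ρ * (adSTFT σ (g3w g) x t η' / adSTFT σ g x t η') := by
    filter_upwards [d0.continuousAt.eventually_ne hV] with η' hη'
    have h := first_order_identity hxc hX g hσ hσpos A φ k t η'
    rw [← hc, ← hρ] at h
    field_simp
    linear_combination h
  have hnum := ((((q1.const_mul c).const_add
    (2 * (π : ℂ) * Complex.I * ((deriv (φ k) t : ℝ) : ℂ) - ρ)).add qE).sub
    (q3.const_mul ρ)).congr_of_eventuallyEq hloc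
  rw [q1.deriv] at hden
  have hden' : adSTFT σ g x t η * adSTFTη σ (g1w g) x t η
      - adSTFT σ (g1w g) x t η * adSTFTη σ g x t η ≠ 0 := by
    intro h
    apply hden
    rw [div_eq_zero_iff]
    left
    unfold adSTFTη at h
    linear_combination h
  unfold P0
  rw [hnum.deriv, q3.deriv, q1.deriv, ← hρ]
  unfold Err3
  change ((c * ((adSTFTη σ (g1w g) x t η * _ - _ * adSTFTη σ g x t η) / _)
    + (_ - _ * adSTFTη σ g x t η) / _) - _ + _) / ((adSTFTη σ (g1w g) x t η * _ -
      _ * adSTFTη σ g x t η) / _) = _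
  rw [sub_add_cancel, mul_comm (adSTFTη σ (g1w g) x t η), div_div_eq_mul_div, div_eq_iff hden']
  field_simp

end
end
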